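/- (Pitts' uniform interpolation theorem, right interpolants.) For every intuitionistic propositional formula φ and every propositional variable p, there exists an intuitionistic propositional formula ε such that: every propositional variable of ε occurs in φ and ε does not contain p; φ ⊨ ε; and for every formula θ not containing p, if φ ⊨ θ then ε ⊨ θ. -/

import Mathlib

/-!
The proof is semantic, following the idea of Visser's layered bisimulations.

For a finite list `A₀` of variables, `layer A₀ n` is a finite list of formulas such that agreement of
two pointed models on `layer A₀ (n + 1)` gives the back-and-forth property with respect to agreement
on `layer A₀ n` (`exists_agree_of_imp`). So agreement on `layer A₀ n` plays the role of
`n`-bisimilarity, and each layer can only distinguish finitely many types of pointed models.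

With `A₀` the variables of `φ` other than `p` and `N = 2 * |Sub φ| + 1`, the interpolant `ε` is the
disjunction of the conjunctions of those sublists `t` of layer `N + 1` which, for some node of a finite
model forcing `φ`, contain all formulas of the layer forced at that node. Then `φ ⊨ ε`, and if `ε` is forced at a node `m` of `M`, there is a node `k` of a finite model
`K` which forces `φ` and agrees with `m` on layer `N`.

The heart of the argument is the amalgamation of `K` and `M` (`amalgam`): a finite model whose nodes
are certain pairs `(k, m)`, in which subformulas of `φ` are forced as in `K` (`amalgam_forces_left`)
and `p`-free formulas as in `M` (`amalgam_forces_right`). If `φ ⊨ θ` with `θ` free of `p`, then `φ`,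
hence `θ`, is forced at `(k, m)`, so `θ` is forced at `m`.
-/

/-- Intuitionistic propositional formulas over variables indexed by `ℕ`. -/
inductive IPForm : Type
  | var : ℕ → IPForm
  | bot : IPForm
  | conj : IPForm → IPForm → IPForm
  | disj : IPForm → IPForm → IPForm
  | impl : IPForm → IPForm → IPForm

/-- The set of propositional variables occurring in a formula. -/
def IPForm.vars : IPForm → Finset ℕ
  | .var p => {p}
  | .bot => ∅
  | .conj a b => a.vars ∪ b.vars
  | .disj a b => a.vars ∪ b.vars
  | .impl a b => a.vars ∪ b.vars

/-- The implication-nesting depth of a formula. -/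
def IPForm.depth : IPForm → ℕ
  | .var _ => 0
  | .bot => 0
  | .conj a b => max a.depth b.depth
  | .disj a b => max a.depth b.depth
  | .impl a b => max a.depth b.depth + 1

/-- An intuitionistic Kripke model: a preorder together with a persistent
valuation of the propositional variables. -/
structure KModel where
  W : Type
  rel : W → W → Prop
  refl : ∀ w, rel w w
  trans : ∀ {u v w}, rel u v → rel v w → rel u w
  val : ℕ → W → Prop
  mono : ∀ {p u v}, rel u v → val p u → val p v

/-- The intuitionistic forcing relation. -/
def KModel.Forces (M : KModel) : M.W → IPForm → Prop
  | w, .var p => M.val p w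
  | _, .bot => False
  | w, .conj a b => M.Forces w a ∧ M.Forces w b
  | w, .disj a b => M.Forces w a ∨ M.Forces w b
  | w, .impl a b => ∀ v, M.rel w v → M.Forces v a → M.Forces v b

/-- Semantic entailment over finite Kripke models. -/
def Entails (φ ψ : IPForm) : Prop :=
  ∀ (M : KModel), Finite M.W → ∀ w : M.W, M.Forces w φ → M.Forces w ψ

namespace PittsInterpolation

/-- Conjunction of a list of formulas; the empty conjunction is `⊥ → ⊥`. -/
def bigConj : List IPForm → IPForm
  | [] => .impl .bot .bot
  | a :: l => .conj a (bigConj l)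

/-- Disjunction of a list of formulas; the empty disjunction is `⊥`. -/
def bigDisj : List IPForm → IPForm
  | [] => .bot
  | a :: l => .disj a (bigDisj l)

theorem forces_bigConj (M : KModel) (w : M.W) (l : List IPForm) :
    M.Forces w (bigConj l) ↔ ∀ a ∈ l, M.Forces w a := by
  induction l with
  | nil => simp [bigConj, KModel.Forces]
  | cons a l ih => simp [bigConj, KModel.Forces, ih]

theorem forces_bigDisj (M : KModel) (w : M.W) (l : List IPForm) :
    M.Forces w (bigDisj l) ↔ ∃ a ∈ l, M.Forces w a := by
  induction l with
  | nil => simp [bigDisj, KModel.Forces]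
  | cons a l ih => simp [bigDisj, KModel.Forces, ih]

theorem vars_bigConj {V : Finset ℕ} {l : List IPForm} (h : ∀ a ∈ l, a.vars ⊆ V) :
    (bigConj l).vars ⊆ V := by
  induction l with
  | nil => simp [bigConj, IPForm.vars]
  | cons a l ih =>
    simp only [List.mem_cons, forall_eq_or_imp] at h
    exact Finset.union_subset h.1 (ih h.2)

theorem vars_bigDisj {V : Finset ℕ} {l : List IPForm} (h : ∀ a ∈ l, a.vars ⊆ V) :
    (bigDisj l).vars ⊆ V := by
  induction l with
  | nil => simp [bigDisj, IPForm.vars]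
  | cons a l ih =>
    simp only [List.mem_cons, forall_eq_or_imp] at h
    exact Finset.union_subset h.1 (ih h.2)

theorem forces_mono (M : KModel) {u v : M.W} (huv : M.rel u v) (ψ : IPForm)
    (h : M.Forces u ψ) : M.Forces v ψ := by
  induction ψ with
  | var q => exact M.mono huv h
  | bot => exact h
  | conj a b iha ihb => exact ⟨iha h.1, ihb h.2⟩
  | disj a b iha ihb => exact h.imp iha ihb
  | impl a b _ _ => exact fun w hw => h w (M.trans huv hw)

/-- The layers: layer `n + 1` consists of layer `n` and of the implications from a conjunction to a
disjunction of formulas of layer `n`. -/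
def layer (A : List IPForm) : ℕ → List IPForm
  | 0 => A
  | n + 1 => layer A n ++ (layer A n).sublists.flatMap fun S =>
      (layer A n).sublists.map fun S' => .impl (bigConj S) (bigDisj S')

theorem layer_mono {A : List IPForm} {m n : ℕ} (h : m ≤ n) : layer A m ⊆ layer A n := by
  induction h with
  | refl => exact fun _ h => h
  | step _ ih => exact fun a ha => List.mem_append_left _ (ih ha)

theorem vars_layer {V : Finset ℕ} {A : List IPForm} (h : ∀ a ∈ A, a.vars ⊆ V) (n : ℕ) :
    ∀ a ∈ layer A n, a.vars ⊆ V := by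
  induction n with
  | zero => exact h
  | succ n ih =>
    intro a ha
    simp only [layer, List.mem_append, List.mem_flatMap, List.mem_map, List.mem_sublists] at ha
    rcases ha with ha | ⟨S, hS, S', hS', rfl⟩
    · exact ih a ha
    · exact Finset.union_subset (vars_bigConj fun a ha => ih a (hS.subset ha))
        (vars_bigDisj fun a ha => ih a (hS'.subset ha))

/-- Two pointed models agree on all formulas of layer `n`: the analogue of `n`-bisimilarity over the
variables in `A`. -/
def Agree (A : List IPForm) (n : ℕ) (K M : KModel) (k : K.W) (m : M.W) : Prop :=
  ∀ a ∈ layer A n, K.Forces k a ↔ M.Forces m a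

theorem Agree.of_le {A : List IPForm} {m n : ℕ} {K M : KModel} {k : K.W} {w : M.W}
    (h : Agree A n K M k w) (hmn : m ≤ n) : Agree A m K M k w :=
  fun a ha => h a (layer_mono hmn ha)

theorem Agree.symm {A : List IPForm} {n : ℕ} {K M : KModel} {k : K.W} {w : M.W}
    (h : Agree A n K M k w) : Agree A n M K w k :=
  fun a ha => (h a ha).symm

/-- The back-and-forth property of layers. Only one inclusion between the forced formulas of layer
`n + 1` is needed to match a successor of `m` by a successor of `k`. -/
theorem exists_agree_of_imp {A : List IPForm} {n : ℕ} {K M : KModel} {k : K.W} {m m' : M.W}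
    (h : ∀ a ∈ layer A (n + 1), K.Forces k a → M.Forces m a) (hm : M.rel m m') :
    ∃ k', K.rel k k' ∧ Agree A n K M k' m' := by
  classical
  by_contra! hcon
  let S := (layer A n).filter fun a => decide (M.Forces m' a)
  let S' := (layer A n).filter fun a => decide (¬ M.Forces m' a)
  have hmem : IPForm.impl (bigConj S) (bigDisj S') ∈ layer A (n + 1) := by
    simp only [layer, List.mem_append, List.mem_flatMap, List.mem_map, List.mem_sublists]
    exact Or.inr ⟨S, List.filter_sublist, S', List.filter_sublist, rfl⟩
  -- A successor of `k` refuting the implication would agree with `m'`.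
  have hk : K.Forces k (.impl (bigConj S) (bigDisj S')) := by
    intro v hv hS
    rw [forces_bigConj] at hS
    rw [forces_bigDisj]
    by_contra! hS'
    refine hcon v hv fun a ha => ⟨fun hva => ?_, fun hma => ?_⟩
    · by_contra hma
      exact hS' a (by simp [S', ha, hma]) hva
    · exact hS a (by simp [S, ha, hma])
  have hd := h _ hmem hk m' hm ((forces_bigConj _ _ _).2 fun a ha => by simp_all [S])
  obtain ⟨a, ha, hma⟩ := (forces_bigDisj _ _ _).1 hd
  simp_all [S']

open Classical in
/-- The finite set of subformulas. -/
noncomputable def subs : IPForm → Finset IPForm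
  | .var q => {.var q}
  | .bot => {.bot}
  | .conj a b => insert (.conj a b) (subs a ∪ subs b)
  | .disj a b => insert (.disj a b) (subs a ∪ subs b)
  | .impl a b => insert (.impl a b) (subs a ∪ subs b)

theorem self_mem_subs (ψ : IPForm) : ψ ∈ subs ψ := by
  cases ψ <;> simp [subs]

theorem var_mem_vars_of_mem_subs {q : ℕ} {φ : IPForm} (h : IPForm.var q ∈ subs φ) :
    q ∈ φ.vars := by
  induction φ with
  | var r => simpa [subs, IPForm.vars] using h
  | bot => simp [subs] at h
  | conj a b iha ihb =>
    simp only [subs, Finset.mem_insert, Finset.mem_union, reduceCtorEq, false_or] at h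
    exact Finset.mem_union.2 (h.imp iha ihb)
  | disj a b iha ihb =>
    simp only [subs, Finset.mem_insert, Finset.mem_union, reduceCtorEq, false_or] at h
    exact Finset.mem_union.2 (h.imp iha ihb)
  | impl a b iha ihb =>
    simp only [subs, Finset.mem_insert, Finset.mem_union, reduceCtorEq, false_or] at h
    exact Finset.mem_union.2 (h.imp iha ihb)

open Classical in
/-- The number of formulas in `X` not forced at `k`; it bounds the length of a chain of successors of
`k` with strictly growing sets of forced formulas in `X`. -/
noncomputable def corank (X : Finset IPForm) (K : KModel) (k : K.W) : ℕ :=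
  (X.filter fun ψ => ¬ K.Forces k ψ).card

theorem corank_le_card (X : Finset IPForm) (K : KModel) (k : K.W) : corank X K k ≤ X.card := by
  classical
  exact Finset.card_filter_le _ _

theorem corank_lt {X : Finset IPForm} {K : KModel} {k k' : K.W}
    (h : ∀ ψ ∈ X, K.Forces k ψ → K.Forces k' ψ) {ψ : IPForm} (hψ : ψ ∈ X)
    (hk : ¬ K.Forces k ψ) (hk' : K.Forces k' ψ) : corank X K k' < corank X K k := by
  classical
  unfold corank
  refine Finset.card_lt_card ((Finset.ssubset_iff_of_subset ?_).2 ⟨ψ, ?_, ?_⟩)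
  · intro χ hχ
    simp only [Finset.mem_filter] at hχ ⊢
    exact ⟨hχ.1, fun hc => hχ.2 (h χ hχ.1 hc)⟩
  · simp [hψ, hk]
  · simp [hk']

theorem corank_congr {X : Finset IPForm} {K : KModel} {k k' : K.W}
    (h : ∀ ψ ∈ X, K.Forces k ψ ↔ K.Forces k' ψ) : corank X K k = corank X K k' := by
  classical
  exact congrArg Finset.card (Finset.filter_congr fun ψ hψ => not_congr (h ψ hψ))

/-- The pairs used as nodes of the amalgam. With `d` the corank of `k`, the nodes `k` and `m` agree on
layer `2 * d`, and there are predecessors `k'` of `k` and `m'` of `m` agreeing on layer `2 * d + 1`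
such that `k'` forces the same formulas in `X` as `k`. -/
def Linked (A : List IPForm) (X : Finset IPForm) (K M : KModel) (k : K.W) (m : M.W) : Prop :=
  Agree A (2 * corank X K k) K M k m ∧
    ∃ k' m', K.rel k' k ∧ M.rel m' m ∧ (∀ ψ ∈ X, K.Forces k ψ → K.Forces k' ψ) ∧
      Agree A (2 * corank X K k + 1) K M k' m'

theorem Linked.of_agree {A : List IPForm} {X : Finset IPForm} {K M : KModel} {k : K.W} {m : M.W}
    {n : ℕ} (h : Agree A n K M k m) (hn : 2 * corank X K k + 1 ≤ n) : Linked A X K M k m :=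
  ⟨h.of_le (by omega), k, m, K.refl k, M.refl m, fun _ _ h => h, h.of_le hn⟩

/-- Successors on the right side lift to linked pairs. The lift is taken above the predecessor
`k'` of `k`, so it need not be a successor of `k`, but it still forces the formulas in `X` forced
at `k`. -/
theorem Linked.lift_right {A : List IPForm} {X : Finset IPForm} {K M : KModel} {k : K.W}
    {m m₁ : M.W} (h : Linked A X K M k m) (hm : M.rel m m₁) :
    ∃ k₁, (∀ ψ ∈ X, K.Forces k ψ → K.Forces k₁ ψ) ∧ Linked A X K M k₁ m₁ := by
  obtain ⟨-, k', m', hk, hm', hX, hag⟩ := h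
  obtain ⟨k₁, hk₁, hag₁⟩ := exists_agree_of_imp (fun a ha => (hag a ha).1) (M.trans hm' hm)
  have hsub : ∀ ψ ∈ X, K.Forces k ψ → K.Forces k₁ ψ :=
    fun ψ hψ h => forces_mono K hk₁ ψ (hX ψ hψ h)
  refine ⟨k₁, hsub, ?_⟩
  by_cases heq : ∀ ψ ∈ X, K.Forces k₁ ψ → K.Forces k ψ
  · have hc : corank X K k₁ = corank X K k :=
      corank_congr fun ψ hψ => ⟨heq ψ hψ, hsub ψ hψ⟩
    refine ⟨hc ▸ hag₁, k', m', hk₁, M.trans hm' hm, fun ψ hψ h => hX ψ hψ (heq ψ hψ h), ?_⟩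
    rw [hc]
    exact hag
  · push Not at heq
    obtain ⟨ψ, hψ, h₁, h₂⟩ := heq
    have := corank_lt hsub hψ h₂ h₁
    exact Linked.of_agree hag₁ (by omega)

/-- Successors on the left side forcing more formulas in `X` lift to linked pairs. -/
theorem Linked.lift_left {A : List IPForm} {X : Finset IPForm} {K M : KModel} {k k₁ : K.W}
    {m : M.W} (h : Linked A X K M k m) (hk : K.rel k k₁) {ψ : IPForm} (hψ : ψ ∈ X)
    (h₀ : ¬ K.Forces k ψ) (h₁ : K.Forces k₁ ψ) : ∃ m₁, M.rel m m₁ ∧ Linked A X K M k₁ m₁ := by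
  have hlt := corank_lt (X := X) (fun χ _ h => forces_mono K hk χ h) hψ h₀ h₁
  have hag : Agree A (2 * corank X K k - 1 + 1) K M k m := h.1.of_le (by omega)
  obtain ⟨m₁, hm₁, hag₁⟩ := exists_agree_of_imp (fun a ha => (hag a ha).2) hk
  exact ⟨m₁, hm₁, Linked.of_agree hag₁.symm (by omega)⟩

/-- The amalgam of `K` and `M`. Its order compares the left components only through the formulas in
`X` they force. The variable `p` is interpreted as in `K`, all others as in `M`; if `var p` is not
in `X`, the order does not make the interpretation from `K` persistent, and `p` is made false. -/
def amalgam (A : List IPForm) (X : Finset IPForm) (p : ℕ) (K M : KModel) : KModel where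
  W := {x : K.W × M.W // Linked A X K M x.1 x.2}
  rel x y := (∀ ψ ∈ X, K.Forces x.1.1 ψ → K.Forces y.1.1 ψ) ∧ M.rel x.1.2 y.1.2
  refl x := ⟨fun _ _ h => h, M.refl _⟩
  trans h₁ h₂ := ⟨fun ψ hψ h => h₂.1 ψ hψ (h₁.1 ψ hψ h), M.trans h₁.2 h₂.2⟩
  val q x := (q = p ∧ IPForm.var p ∈ X ∧ K.val p x.1.1) ∨ (q ≠ p ∧ M.val q x.1.2)
  mono := by
    rintro q x y hxy (⟨hq, hX, hv⟩ | ⟨hq, hv⟩)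
    · exact Or.inl ⟨hq, hX, hxy.1 _ hX hv⟩
    · exact Or.inr ⟨hq, M.mono hxy.2 hv⟩

/-- The right projection is a bisimulation for all variables except `p`. -/
theorem amalgam_forces_right {A : List IPForm} {X : Finset IPForm} {p : ℕ} {K M : KModel}
    (θ : IPForm) (hθ : p ∉ θ.vars) (x : (amalgam A X p K M).W) :
    (amalgam A X p K M).Forces x θ ↔ M.Forces x.1.2 θ := by
  induction θ generalizing x with
  | var q =>
    have hq : q ≠ p := by
      rintro rfl
      simp [IPForm.vars] at hθ
    simp [KModel.Forces, amalgam, hq]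
  | bot => exact Iff.rfl
  | conj a b iha ihb =>
    simp only [IPForm.vars, Finset.mem_union, not_or] at hθ
    exact and_congr (iha hθ.1 x) (ihb hθ.2 x)
  | disj a b iha ihb =>
    simp only [IPForm.vars, Finset.mem_union, not_or] at hθ
    exact or_congr (iha hθ.1 x) (ihb hθ.2 x)
  | impl a b iha ihb =>
    simp only [IPForm.vars, Finset.mem_union, not_or] at hθ
    constructor
    · intro h m₁ hm₁ ha
      obtain ⟨k₁, hk₁, hl⟩ := x.2.lift_right hm₁
      exact (ihb hθ.2 ⟨(k₁, m₁), hl⟩).1 (h ⟨(k₁, m₁), hl⟩ ⟨hk₁, hm₁⟩ ((iha hθ.1 _).2 ha))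
    · intro h y hxy ha
      exact (ihb hθ.2 y).2 (h _ hxy.2 ((iha hθ.1 y).1 ha))

/-- Subformulas of `φ` are forced in the amalgam as in the left model, provided all variables of `φ`
except `p` lie in `A`. -/
theorem amalgam_forces_left {A : List IPForm} {φ : IPForm} {p : ℕ} {K M : KModel}
    (hA : ∀ q ∈ φ.vars, q ≠ p → IPForm.var q ∈ A)
    (ψ : IPForm) (hψ : subs ψ ⊆ subs φ) (x : (amalgam A (subs φ) p K M).W) :
    (amalgam A (subs φ) p K M).Forces x ψ ↔ K.Forces x.1.1 ψ := by
  have hmem : ψ ∈ subs φ := hψ (self_mem_subs ψ)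
  induction ψ generalizing x with
  | var q =>
    by_cases hq : q = p
    · subst hq
      simp [KModel.Forces, amalgam, hmem]
    · have := x.2.1.of_le (Nat.zero_le _) (.var q) (hA q (var_mem_vars_of_mem_subs hmem) hq)
      simpa [KModel.Forces, amalgam, hq] using this.symm
  | bot => exact Iff.rfl
  | conj a b iha ihb =>
    classical
    have hab := Finset.union_subset_iff.1 ((Finset.subset_insert _ _).trans hψ)
    exact and_congr (iha hab.1 x (hab.1 (self_mem_subs a)))
      (ihb hab.2 x (hab.2 (self_mem_subs b)))
  | disj a b iha ihb =>
    classical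
    have hab := Finset.union_subset_iff.1 ((Finset.subset_insert _ _).trans hψ)
    exact or_congr (iha hab.1 x (hab.1 (self_mem_subs a)))
      (ihb hab.2 x (hab.2 (self_mem_subs b)))
  | impl a b iha ihb =>
    classical
    have hab := Finset.union_subset_iff.1 ((Finset.subset_insert _ _).trans hψ)
    have ha := hab.1 (self_mem_subs a)
    have hb := hab.2 (self_mem_subs b)
    constructor
    · intro h k₁ hk₁ ha₁
      by_cases ha₀ : K.Forces x.1.1 a
      -- If `a` is already forced at `x`, then `x` itself is the relevant successor.
      · exact forces_mono K hk₁ b ((ihb hab.2 x hb).1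
          (h x ((amalgam A (subs φ) p K M).refl x) ((iha hab.1 x ha).2 ha₀)))
      · obtain ⟨m₁, hm₁, hl⟩ := x.2.lift_left hk₁ ha ha₀ ha₁
        exact (ihb hab.2 ⟨(k₁, m₁), hl⟩ hb).1 (h ⟨(k₁, m₁), hl⟩
          ⟨fun χ _ hχ => forces_mono K hk₁ χ hχ, hm₁⟩ ((iha hab.1 _ ha).2 ha₁))
    · intro h y hxy hya
      exact (ihb hab.2 y hb).2
        (hxy.1 _ hmem h _ (K.refl _) ((iha hab.1 y ha).1 hya))

end PittsInterpolation

open PittsInterpolation in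
/-- **Pitts' uniform interpolation theorem, right interpolants.**
For every intuitionistic propositional formula φ and variable p, there is a
formula ε whose variables occur in φ, not containing p, with φ ⊨ ε, and
interpolating every p-free consequence of φ. -/
theorem pitts_right_uniform_interpolation (φ : IPForm) (p : ℕ) :
    ∃ ε : IPForm, ε.vars ⊆ φ.vars ∧ p ∉ ε.vars ∧ Entails φ ε ∧
      ∀ θ : IPForm, p ∉ θ.vars → Entails φ θ → Entails ε θ := by
  classical
  let A : List IPForm := (φ.vars.erase p).toList.map .var
  let L := layer A (2 * (subs φ).card + 1 + 1)
  let realized : List IPForm → Prop := fun t => ∃ K : KModel, Finite K.W ∧ ∃ k : K.W,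
    K.Forces k φ ∧ ∀ a ∈ L, K.Forces k a → a ∈ t
  let ε := bigDisj ((L.sublists.filter fun t => decide (realized t)).map bigConj)
  have hvars : ε.vars ⊆ φ.vars.erase p := by
    refine vars_bigDisj fun a ha => ?_
    simp only [List.mem_map, List.mem_filter, List.mem_sublists] at ha
    obtain ⟨t, ⟨ht, -⟩, rfl⟩ := ha
    refine vars_bigConj fun a ha => vars_layer (A := A) ?_ _ a (ht.subset ha)
    intro a ha
    simp only [A, List.mem_map, Finset.mem_toList] at ha
    obtain ⟨q, hq, rfl⟩ := ha
    simpa [IPForm.vars] using hq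
  refine ⟨ε, hvars.trans (Finset.erase_subset _ _), fun h => ?_, ?_, ?_⟩
  · simpa using hvars h
  · intro M hM w hw
    refine (forces_bigDisj _ _ _).2 ⟨bigConj (L.filter fun a => decide (M.Forces w a)), ?_, ?_⟩
    · refine List.mem_map_of_mem (List.mem_filter.2
        ⟨List.mem_sublists.2 List.filter_sublist, decide_eq_true ⟨M, hM, w, hw, ?_⟩⟩)
      intro a ha hwa
      simp [ha, hwa]
    · exact (forces_bigConj _ _ _).2 fun a ha => by simp_all
  · intro θ hθ hφθ M hM m hm
    obtain ⟨a, ha, hma⟩ := (forces_bigDisj _ _ _).1 hm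
    simp only [List.mem_map, List.mem_filter, decide_eq_true_eq] at ha
    obtain ⟨t, ⟨-, K, hK, k, hk, ht⟩, rfl⟩ := ha
    rw [forces_bigConj] at hma
    obtain ⟨k₁, hk₁, hag⟩ := exists_agree_of_imp (A := A) (K := K) (k := k)
      (fun a ha hka => hma a (ht a ha hka)) (M.refl m)
    have hl : Linked A (subs φ) K M k₁ m :=
      Linked.of_agree hag (by have := corank_le_card (subs φ) K k₁; omega)
    have hfin : Finite (amalgam A (subs φ) p K M).W :=
      inferInstanceAs (Finite {x : K.W × M.W // Linked A (subs φ) K M x.1 x.2})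
    refine (amalgam_forces_right θ hθ ⟨(k₁, m), hl⟩).1 (hφθ _ hfin _ ?_)
    refine (amalgam_forces_left ?_ φ subset_rfl _).2 (forces_mono K hk₁ φ hk)
    intro q hq hqp
    simp [A, hq, hqp]
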